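/- For every non-squarefree integer b ≥ 5 there exists an integer a with 1 < a < b such that the block complexity p_{a,b}(n) of the leading digit sequence of a^n in base b is not of the form c·n + d for all n ≥ 1 with integers c ≥ 1 and d. -/

import Mathlib

/-- The leading digit of `x` in base `b`: the unique `d ∈ {1,…,b-1}` with
`d · b^k ≤ x < (d+1) · b^k` for some integer `k` (here `k = ⌊log_b x⌋`). -/
noncomputable def leadingDigit (b : ℕ) (x : ℝ) : ℕ :=
  (⌊x / (b : ℝ) ^ (⌊Real.logb b x⌋ : ℤ)⌋).toNat

/-- The block complexity of the leading digit sequence of `a^n` in base `b`: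
the number of distinct blocks of length `n`. -/
noncomputable def blockComplexity (a : ℝ) (b : ℕ) (n : ℕ) : ℕ :=
  Set.ncard {w : Fin n → ℕ |
    ∃ m : ℕ, 1 ≤ m ∧ ∀ i : Fin n, w i = leadingDigit b (a ^ (m + (i : ℕ)))}

/-- normal form of `x` in `[1,b)` modulo powers of `b`. -/
noncomputable def nrmB (b : ℕ) (x : ℝ) : ℝ := x / (b : ℝ) ^ (⌊Real.logb b x⌋ : ℤ)

lemma nrmB_bounds {b : ℕ} (hb : 5 ≤ b) {x : ℝ} (hx : 0 < x) :
    1 ≤ nrmB b x ∧ nrmB b x < b := by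
  have hb1 : (1 : ℝ) < b := by exact_mod_cast (by omega : 1 < b)
  have hb0 : (0 : ℝ) < b := by linarith
  have hlog : (b : ℝ) ^ (Real.logb b x) = x := Real.rpow_logb hb0 (by linarith) hx
  have h1 : (b : ℝ) ^ (⌊Real.logb b x⌋ : ℤ) ≤ x := by
    rw [← Real.rpow_intCast]
    calc _ ≤ (b : ℝ) ^ (Real.logb b x) :=
          Real.rpow_le_rpow_of_exponent_le hb1.le (Int.floor_le _)
      _ = x := hlog
  have h2 : x < (b : ℝ) ^ (⌊Real.logb b x⌋ : ℤ) * b := by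
    rw [← zpow_add_one₀ hb0.ne', ← Real.rpow_intCast]
    calc x = (b : ℝ) ^ (Real.logb b x) := hlog.symm
      _ < _ := Real.rpow_lt_rpow_of_exponent_lt hb1 (by push_cast; exact Int.lt_floor_add_one _)
  have hp : 0 < (b : ℝ) ^ (⌊Real.logb b x⌋ : ℤ) := by positivity
  unfold nrmB
  constructor
  · rw [le_div_iff₀ hp]; linarith
  · rw [div_lt_iff₀ hp]; linarith

lemma nrmB_spec {b : ℕ} (hb : 5 ≤ b) (x : ℝ) : ∃ k : ℤ, nrmB b x = x * (b : ℝ) ^ k :=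
  ⟨-⌊Real.logb b x⌋, by rw [nrmB, zpow_neg, div_eq_mul_inv]⟩

/-- uniqueness of the normal form -/
lemma zpow_unique {b : ℕ} (hb : 5 ≤ b) {x y : ℝ} (hx : 1 ≤ x) (hx' : x < b)
    (hy : 1 ≤ y) (hy' : y < b) {k : ℤ} (h : x = y * (b : ℝ) ^ k) : x = y := by
  have hb1 : (1 : ℝ) < b := by exact_mod_cast (by omega : 1 < b)
  have hb0 : (0 : ℝ) < b := by linarith
  have hp : 0 < (b : ℝ) ^ k := by positivity
  have h1 : (b : ℝ) ^ k < (b : ℝ) ^ (1 : ℤ) := by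
    rw [zpow_one]; nlinarith
  have h2 : (b : ℝ) ^ (-1 : ℤ) < (b : ℝ) ^ k := by
    rw [zpow_neg_one, inv_lt_iff_one_lt_mul₀ hb0]; nlinarith
  rw [zpow_lt_zpow_iff_right₀ hb1] at h1 h2
  have : k = 0 := by omega
  subst this; simpa using h

lemma nrmB_mul_zpow {b : ℕ} (hb : 5 ≤ b) {x : ℝ} (hx : 0 < x) (k : ℤ) :
    nrmB b (x * (b : ℝ) ^ k) = nrmB b x := by
  have hb0 : (0 : ℝ) < b := by exact_mod_cast (by omega : 0 < b)
  obtain ⟨k1, h1⟩ := nrmB_spec hb x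
  obtain ⟨k2, h2⟩ := nrmB_spec hb (x * (b : ℝ) ^ k)
  obtain ⟨a1, a2⟩ := nrmB_bounds hb hx
  obtain ⟨c1, c2⟩ := nrmB_bounds hb (x := x * (b : ℝ) ^ k) (by positivity)
  refine zpow_unique hb c1 c2 a1 a2 (k := k + k2 - k1) ?_
  rw [h1, h2, zpow_sub₀ hb0.ne', zpow_add₀ hb0.ne']
  field_simp

lemma nrmB_self {b : ℕ} (hb : 5 ≤ b) {x : ℝ} (hx : 1 ≤ x) (hx' : x < b) : nrmB b x = x := by
  obtain ⟨k1, h1⟩ := nrmB_spec hb x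
  obtain ⟨a1, a2⟩ := nrmB_bounds hb (x := x) (by linarith)
  exact zpow_unique hb a1 a2 hx hx' h1

lemma ld_eq (b : ℕ) (x : ℝ) : leadingDigit b x = (⌊nrmB b x⌋).toNat := rfl

lemma ld_mul_zpow {b : ℕ} (hb : 5 ≤ b) {x : ℝ} (hx : 0 < x) (k : ℤ) :
    leadingDigit b (x * (b : ℝ) ^ k) = leadingDigit b x := by
  rw [ld_eq, ld_eq, nrmB_mul_zpow hb hx]

lemma ld_spec {b : ℕ} (hb : 5 ≤ b) {x : ℝ} (hx : 0 < x) :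
    1 ≤ leadingDigit b x ∧ leadingDigit b x < b ∧ ∃ k : ℤ,
      (leadingDigit b x : ℝ) * (b : ℝ) ^ k ≤ x ∧ x < (leadingDigit b x + 1 : ℝ) * (b : ℝ) ^ k := by
  have hb0 : (0 : ℝ) < b := by exact_mod_cast (by omega : 0 < b)
  obtain ⟨a1, a2⟩ := nrmB_bounds hb hx
  have hld : leadingDigit b x = ⌊nrmB b x⌋₊ := rfl
  have hf := Nat.floor_le (a := nrmB b x) (by linarith)
  have hf' := Nat.lt_floor_add_one (nrmB b x)
  rw [hld]
  refine ⟨Nat.le_floor (by simpa using a1), (Nat.floor_lt (by linarith)).2 a2, ?_⟩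
  obtain ⟨k, hk⟩ := nrmB_spec hb x
  refine ⟨-k, ?_, ?_⟩
  · rw [hk] at hf ⊢
    rw [zpow_neg, ← div_eq_mul_inv, div_le_iff₀ (by positivity)]; exact hf
  · rw [hk] at hf' ⊢
    rw [zpow_neg, ← div_eq_mul_inv, lt_div_iff₀ (by positivity)]; exact hf'

lemma ld_eq_of {b : ℕ} (hb : 5 ≤ b) {x : ℝ} {d : ℕ} (hd : 1 ≤ d) (hd' : d < b) {k : ℤ}
    (h1 : (d : ℝ) * (b : ℝ) ^ k ≤ x) (h2 : x < (d + 1 : ℝ) * (b : ℝ) ^ k) :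
    leadingDigit b x = d := by
  have hb0 : (0 : ℝ) < b := by exact_mod_cast (by omega : 0 < b)
  have hd1 : (1 : ℝ) ≤ d := by exact_mod_cast hd
  have hd2 : (d : ℝ) + 1 ≤ b := by exact_mod_cast hd'
  have hp : 0 < (b : ℝ) ^ k := by positivity
  have hy1 : (d : ℝ) ≤ x * (b : ℝ) ^ (-k) := by
    rw [zpow_neg, ← div_eq_mul_inv, le_div_iff₀ hp]; exact h1
  have hy2 : x * (b : ℝ) ^ (-k) < d + 1 := by
    rw [zpow_neg, ← div_eq_mul_inv, div_lt_iff₀ hp]; exact h2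
  have hx : 0 < x := by nlinarith
  rw [← ld_mul_zpow hb hx (-k), ld_eq, nrmB_self hb (by linarith) (by linarith)]
  change ⌊x * (b : ℝ) ^ (-k)⌋₊ = d
  rw [Nat.floor_eq_iff (by linarith)]
  exact ⟨hy1, hy2⟩

/-- word read off from `x` -/
noncomputable def wrd (a : ℝ) (b n : ℕ) (x : ℝ) : Fin n → ℕ :=
  fun i => leadingDigit b (x * a ^ (i : ℕ))

/-- cut points -/
def cuts (a : ℝ) (b n : ℕ) : Set ℝ :=
  {q | ∃ i : ℕ, i < n ∧ ∃ d : ℕ, 1 ≤ d ∧ d < b ∧ q = nrmB b (d / a ^ i)}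

lemma wrd_mul_zpow {a : ℝ} (ha : 1 < a) {b : ℕ} (hb : 5 ≤ b) (n : ℕ) {x : ℝ} (hx : 0 < x)
    (k : ℤ) : wrd a b n (x * (b : ℝ) ^ k) = wrd a b n x := by
  funext i
  have : (0 : ℝ) < a := by linarith
  unfold wrd
  rw [← ld_mul_zpow hb (x := x * a ^ (i : ℕ)) (by positivity) k]
  congr 1; ring

lemma wrd_surj {a : ℝ} (ha : 1 < a) {b : ℕ} (hb : 5 ≤ b) {n : ℕ} (hn : 1 ≤ n) {x : ℝ}
    (hx : 0 < x) : ∃ q ∈ cuts a b n, wrd a b n q = wrd a b n x := by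
  have hb0 : (0 : ℝ) < b := by exact_mod_cast (by omega : 0 < b)
  have ha0 : (0 : ℝ) < a := by linarith
  have hpos : ∀ i : ℕ, 0 < x * a ^ i := fun i => by positivity
  choose k hk1 hk2 using fun i : ℕ => (ld_spec hb (hpos i)).2.2
  have : Nonempty (Fin n) := ⟨⟨0, hn⟩⟩
  obtain ⟨j, hj⟩ := Finite.exists_max
    (fun i : Fin n => (leadingDigit b (x * a ^ (i : ℕ)) : ℝ) * (b : ℝ) ^ (k i) / a ^ (i : ℕ))
  set q := (leadingDigit b (x * a ^ (j : ℕ)) : ℝ) * (b : ℝ) ^ (k j) / a ^ (j : ℕ) with hq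
  have hdj := ld_spec hb (hpos j)
  have hd0 : (0 : ℝ) < leadingDigit b (x * a ^ (j : ℕ)) := by exact_mod_cast hdj.1
  have hq0 : 0 < q := by positivity
  have hqx : q ≤ x := by
    rw [hq, div_le_iff₀ (by positivity)]; exact hk1 j
  have hwq : wrd a b n q = wrd a b n x := by
    funext i
    have hdi := ld_spec hb (hpos i)
    refine ld_eq_of hb hdi.1 hdi.2.1 (k := k i) ?_ ?_
    · have := hj i
      rwa [div_le_iff₀ (by positivity)] at this
    · exact lt_of_le_of_lt (mul_le_mul_of_nonneg_right hqx (by positivity)) (hk2 i)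
  obtain ⟨l, hl⟩ := nrmB_spec hb q
  refine ⟨nrmB b q, ⟨j, j.2, _, hdj.1, hdj.2.1, ?_⟩, ?_⟩
  · rw [← nrmB_mul_zpow hb (x := (leadingDigit b (x * a ^ (j : ℕ)) : ℝ) / a ^ (j : ℕ))
      (by positivity) (k j)]
    congr 1; rw [hq]; ring
  · rw [hl, wrd_mul_zpow ha hb n hq0, hwq]

lemma wrd_inj_aux {a : ℝ} (ha : 1 < a) {b : ℕ} (hb : 5 ≤ b) {n : ℕ} {q q' : ℝ}
    (hq : q ∈ cuts a b n) (hq' : 0 < q') (h : wrd a b n q = wrd a b n q') :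
    ∃ s : ℤ, q * (b : ℝ) ^ s ≤ q' ∧ q' < 2 * q * (b : ℝ) ^ s := by
  have hb0 : (0 : ℝ) < b := by exact_mod_cast (by omega : 0 < b)
  have ha0 : (0 : ℝ) < a := by linarith
  obtain ⟨i, hi, d, hd, hd', rfl⟩ := hq
  have hd1 : (1 : ℝ) ≤ d := by exact_mod_cast hd
  obtain ⟨k, hk⟩ := nrmB_spec hb ((d : ℝ) / a ^ i)
  rw [hk] at h ⊢
  rw [wrd_mul_zpow ha hb n (by positivity)] at h
  have h0 := congrFun h ⟨i, hi⟩
  simp only [wrd] at h0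
  rw [div_mul_cancel₀ _ (by positivity)] at h0
  have h1 : leadingDigit b (d : ℝ) = d :=
    ld_eq_of hb hd hd' (k := 0) (by simp) (by simp)
  rw [h1] at h0
  obtain ⟨-, -, l, hl1, hl2⟩ := ld_spec hb (x := q' * a ^ i) (by positivity)
  rw [← h0] at hl1 hl2
  refine ⟨l - k, ?_, ?_⟩
  · have : (d : ℝ) / a ^ i * (b : ℝ) ^ k * (b : ℝ) ^ (l - k) = d * (b : ℝ) ^ l / a ^ i := by
      rw [zpow_sub₀ hb0.ne']; field_simp
    rw [this, div_le_iff₀ (by positivity)]; exact hl1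
  · have : 2 * ((d : ℝ) / a ^ i * (b : ℝ) ^ k) * (b : ℝ) ^ (l - k)
        = 2 * d * (b : ℝ) ^ l / a ^ i := by
      rw [zpow_sub₀ hb0.ne']; field_simp
    rw [this, lt_div_iff₀ (by positivity)]
    have : 0 < (b : ℝ) ^ l := by positivity
    nlinarith

lemma cuts_bounds {a : ℝ} (ha : 1 < a) {b : ℕ} (hb : 5 ≤ b) {n : ℕ} {q : ℝ}
    (hq : q ∈ cuts a b n) : 1 ≤ q ∧ q < b := by
  have ha0 : (0 : ℝ) < a := by linarith
  obtain ⟨i, hi, d, hd, hd', rfl⟩ := hq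
  have hd1 : (1 : ℝ) ≤ d := by exact_mod_cast hd
  exact nrmB_bounds hb (by positivity)

lemma wrd_inj {a : ℝ} (ha : 1 < a) {b : ℕ} (hb : 5 ≤ b) {n : ℕ} :
    Set.InjOn (wrd a b n) (cuts a b n) := by
  intro q hq q' hq' h
  have hb0 : (0 : ℝ) < b := by exact_mod_cast (by omega : 0 < b)
  have hb5 : (5 : ℝ) ≤ b := by exact_mod_cast hb
  have B := cuts_bounds ha hb hq
  have B' := cuts_bounds ha hb hq'
  have hq0 : 0 < q := by linarith
  have hq0' : 0 < q' := by linarith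
  obtain ⟨s, hs1, hs2⟩ := wrd_inj_aux ha hb hq hq0' h
  obtain ⟨t, ht1, ht2⟩ := wrd_inj_aux ha hb hq' hq0 h.symm
  have hS : 0 < (b : ℝ) ^ s := by positivity
  have hT : 0 < (b : ℝ) ^ t := by positivity
  have e : (b : ℝ) ^ (s + t) = (b : ℝ) ^ s * (b : ℝ) ^ t := zpow_add₀ hb0.ne' _ _
  have u1 : (b : ℝ) ^ (s + t) < (b : ℝ) ^ (1 : ℤ) := by
    rw [zpow_one, e]
    have : q * ((b : ℝ) ^ s * (b : ℝ) ^ t) ≤ q * 1 := by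
      calc _ = q * (b : ℝ) ^ s * (b : ℝ) ^ t := by ring
        _ ≤ q' * (b : ℝ) ^ t := mul_le_mul_of_nonneg_right hs1 hT.le
        _ ≤ _ := by linarith
    have := le_of_mul_le_mul_left this hq0
    linarith
  have u2 : (b : ℝ) ^ (-1 : ℤ) < (b : ℝ) ^ (s + t) := by
    rw [zpow_neg_one, inv_lt_iff_one_lt_mul₀ hb0, e]
    have : q * 1 < q * (4 * ((b : ℝ) ^ s * (b : ℝ) ^ t)) := by
      calc q * 1 < 2 * q' * (b : ℝ) ^ t := by linarith
        _ ≤ 2 * (2 * q * (b : ℝ) ^ s) * (b : ℝ) ^ t := by gcongr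
        _ = _ := by ring
    have := lt_of_mul_lt_mul_left this hq0.le
    nlinarith [mul_pos hS hT]
  rw [zpow_lt_zpow_iff_right₀ (by linarith)] at u1 u2
  have hst : t = -s := by omega
  subst hst
  rw [zpow_neg, ← div_eq_mul_inv, div_le_iff₀ hS] at ht1
  exact (zpow_unique hb B'.1 B'.2 B.1 B.2 (k := s) (le_antisymm ht1 hs1)).symm

lemma dense_aux {a : ℝ} (ha : 1 < a) {b : ℕ} (hb : 5 ≤ b) (hirr : Irrational (Real.logb b a))
    {x y : ℝ} (hx : 0 < x) (hxy : x < y) :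
    ∃ m : ℕ, 1 ≤ m ∧ ∃ k : ℤ, x < a ^ m * (b : ℝ) ^ k ∧ a ^ m * (b : ℝ) ^ k < y := by
  have hb1 : (1 : ℝ) < b := by exact_mod_cast (by omega : 1 < b)
  have hb0 : (0 : ℝ) < b := by linarith
  have ha0 : (0 : ℝ) < a := by linarith
  have : Fact ((0 : ℝ) < 1) := ⟨one_pos⟩
  set α := Real.logb b a with hα
  have hd : DenseRange (fun n : ℕ => n • ((α : ℝ) : AddCircle (1 : ℝ))) := by
    have h := (AddCircle.denseRange_zsmul_coe_iff (a := α) (p := 1)).2 (by simpa using hirr)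
    rw [DenseRange, dense_iff_closure_eq] at h ⊢
    rw [← h]
    exact (closure_range_zsmul_eq_nsmul _).symm
  have hlt : Real.logb b x - α < Real.logb b y - α := by
    have := Real.logb_lt_logb hb1 hx hxy
    linarith
  have hopen : IsOpen ((fun t : ℝ => (t : AddCircle (1 : ℝ))) ''
      Set.Ioo (Real.logb b x - α) (Real.logb b y - α)) :=
    QuotientAddGroup.isOpenMap_coe _ isOpen_Ioo
  obtain ⟨m, t, ⟨ht1, ht2⟩, hmt⟩ := hd.exists_mem_open hopen ((Set.nonempty_Ioo.2 hlt).image _)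
  have hmt' : ((t : ℝ) : AddCircle (1 : ℝ)) = ((m * α : ℝ) : AddCircle (1 : ℝ)) := by
    simp only at hmt
    rw [hmt, ← AddCircle.coe_nsmul, nsmul_eq_mul]
  rw [← sub_eq_zero, ← AddCircle.coe_sub, AddCircle.coe_eq_zero_iff] at hmt'
  obtain ⟨k, hk⟩ := hmt'
  rw [zsmul_eq_mul, mul_one] at hk
  have hlogeq : Real.logb b (a ^ (m + 1) * (b : ℝ) ^ k) = t + α := by
    rw [Real.logb_mul (by positivity) (by positivity), Real.logb_pow, ← Real.rpow_intCast,
      Real.logb_rpow hb0 hb1.ne', hk]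
    push_cast; ring
  refine ⟨m + 1, by omega, k, ?_, ?_⟩
  · rw [← Real.logb_lt_logb_iff hb1 hx (by positivity), hlogeq]; linarith
  · rw [← Real.logb_lt_logb_iff hb1 (by positivity) (by linarith), hlogeq]; linarith

lemma ld_right {b : ℕ} (hb : 5 ≤ b) {x : ℝ} (hx : 0 < x) :
    ∃ y, x < y ∧ ∀ z, x ≤ z → z < y → leadingDigit b z = leadingDigit b x := by
  obtain ⟨h1, h2, k, hk1, hk2⟩ := ld_spec hb hx
  exact ⟨_, hk2, fun z hz1 hz2 => ld_eq_of hb h1 h2 (hk1.trans hz1) hz2⟩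

lemma wrd_right {a : ℝ} (ha : 1 < a) {b : ℕ} (hb : 5 ≤ b) (n : ℕ) {x : ℝ} (hx : 0 < x) :
    ∃ y, x < y ∧ ∀ z, x ≤ z → z < y → wrd a b n z = wrd a b n x := by
  have ha0 : (0 : ℝ) < a := by linarith
  choose f hf1 hf2 using fun i : Fin n =>
    ld_right hb (x := x * a ^ (i : ℕ)) (by positivity)
  have hfin : ∃ y, x < y ∧ ∀ i : Fin n, y ≤ f i / a ^ (i : ℕ) := by
    rcases isEmpty_or_nonempty (Fin n) with he | he
    · exact ⟨x + 1, by linarith, fun i => (he.false i).elim⟩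
    · obtain ⟨j, hj⟩ := Finite.exists_min (fun i : Fin n => f i / a ^ (i : ℕ))
      refine ⟨_, ?_, hj⟩
      rw [lt_div_iff₀ (by positivity)]; exact hf1 j
  obtain ⟨y, hy, hyi⟩ := hfin
  refine ⟨y, hy, fun z hz1 hz2 => funext fun i => hf2 i _ ?_ ?_⟩
  · exact mul_le_mul_of_nonneg_right hz1 (by positivity)
  · have := hz2.trans_le (hyi i)
    rwa [lt_div_iff₀ (by positivity)] at this

lemma blockComplexity_eq {a : ℝ} (ha : 1 < a) {b : ℕ} (hb : 5 ≤ b)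
    (hirr : Irrational (Real.logb b a)) {n : ℕ} (hn : 1 ≤ n) :
    blockComplexity a b n = (cuts a b n).ncard := by
  have hb0 : (0 : ℝ) < b := by exact_mod_cast (by omega : 0 < b)
  have ha0 : (0 : ℝ) < a := by linarith
  rw [← Set.ncard_image_of_injOn (wrd_inj ha hb (n := n)), blockComplexity]
  congr 1
  ext w
  constructor
  · rintro ⟨m, hm, hw⟩
    obtain ⟨q, hq, hqw⟩ := wrd_surj ha hb hn (x := a ^ m) (by positivity)
    refine ⟨q, hq, ?_⟩
    rw [hqw]; funext i
    rw [hw i, wrd, pow_add]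
  · rintro ⟨q, hq, rfl⟩
    have hq0 : 0 < q := by linarith [(cuts_bounds ha hb hq).1]
    obtain ⟨y, hy, hyz⟩ := wrd_right ha hb n hq0
    obtain ⟨m, hm, k, hk1, hk2⟩ := dense_aux ha hb hirr hq0 hy
    refine ⟨m, hm, fun i => ?_⟩
    rw [← hyz _ hk1.le hk2, wrd_mul_zpow ha hb n (by positivity), wrd, pow_add]

/-- the i-th layer of cut points -/
def lay (a : ℝ) (b i : ℕ) : Set ℝ := {q | ∃ d : ℕ, 1 ≤ d ∧ d < b ∧ q = nrmB b (d / a ^ i)}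

lemma cuts_succ (a : ℝ) (b n : ℕ) : cuts a b (n + 1) = cuts a b n ∪ lay a b n := by
  ext q
  constructor
  · rintro ⟨i, hi, h⟩
    rcases Nat.lt_succ_iff_lt_or_eq.1 hi with h1 | rfl
    · exact Or.inl ⟨i, h1, h⟩
    · exact Or.inr h
  · rintro (⟨i, hi, h⟩ | h)
    · exact ⟨i, by omega, h⟩
    · exact ⟨n, by omega, h⟩

lemma cuts_zero (a : ℝ) (b : ℕ) : cuts a b 0 = ∅ := by
  ext q; simp [cuts]

lemma lay_finite (a : ℝ) (b i : ℕ) : (lay a b i).Finite := by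
  refine ((Set.finite_Iio b).image (fun d : ℕ => nrmB b (d / a ^ i))).subset ?_
  rintro q ⟨d, -, h, rfl⟩
  exact ⟨d, h, rfl⟩

lemma nrmB_div {a : ℝ} (ha : 1 < a) {b : ℕ} (hb : 5 ≤ b) {x : ℝ} (hx : 0 < x) :
    nrmB b (nrmB b x / a) = nrmB b (x / a) := by
  have ha0 : (0 : ℝ) < a := by linarith
  obtain ⟨k, hk⟩ := nrmB_spec hb x
  rw [hk, ← nrmB_mul_zpow hb (x := x / a) (by positivity) k]
  congr 1; ring

lemma nrmB_div_inj {a : ℝ} (ha : 1 < a) {b : ℕ} (hb : 5 ≤ b) {x y : ℝ} (hx : 1 ≤ x) (hx' : x < b)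
    (hy : 1 ≤ y) (hy' : y < b) (h : nrmB b (x / a) = nrmB b (y / a)) : x = y := by
  have hb0 : (0 : ℝ) < b := by exact_mod_cast (by omega : 0 < b)
  have ha0 : (0 : ℝ) < a := by linarith
  obtain ⟨k, hk⟩ := nrmB_spec hb (x / a)
  obtain ⟨l, hl⟩ := nrmB_spec hb (y / a)
  refine zpow_unique hb hx hx' hy hy' (k := l - k) ?_
  rw [hk, hl] at h
  rw [zpow_sub₀ hb0.ne']
  field_simp at h ⊢
  exact h

lemma lay_bounds {a : ℝ} (ha : 1 < a) {b : ℕ} (hb : 5 ≤ b) {i : ℕ} {q : ℝ}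
    (hq : q ∈ lay a b i) : 1 ≤ q ∧ q < b :=
  cuts_bounds ha hb (n := i + 1) (by rw [cuts_succ]; exact Or.inr hq)

lemma lay_mem_succ {a : ℝ} (ha : 1 < a) {b : ℕ} (hb : 5 ≤ b) {i : ℕ} {q : ℝ}
    (hq : q ∈ lay a b i) : nrmB b (q / a) ∈ lay a b (i + 1) := by
  have ha0 : (0 : ℝ) < a := by linarith
  obtain ⟨d, hd, hd', rfl⟩ := hq
  have hd1 : (1 : ℝ) ≤ d := by exact_mod_cast hd
  refine ⟨d, hd, hd', ?_⟩
  rw [nrmB_div ha hb (by positivity), pow_succ, div_div]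

lemma lay_succ_exists {a : ℝ} (ha : 1 < a) {b : ℕ} (hb : 5 ≤ b) {i : ℕ} {q : ℝ}
    (hq : q ∈ lay a b (i + 1)) : ∃ r ∈ lay a b i, nrmB b (r / a) = q := by
  have ha0 : (0 : ℝ) < a := by linarith
  obtain ⟨d, hd, hd', rfl⟩ := hq
  have hd1 : (1 : ℝ) ≤ d := by exact_mod_cast hd
  refine ⟨_, ⟨d, hd, hd', rfl⟩, ?_⟩
  rw [nrmB_div ha hb (by positivity), pow_succ, div_div]

lemma cuts_count {a : ℝ} (ha : 1 < a) {b : ℕ} (hb : 5 ≤ b) {e : ℝ} (he0 : e ∈ lay a b 0)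
    (he2 : e ∈ lay a b 2) (he1 : e ∉ lay a b 1) :
    (cuts a b 3).ncard + (cuts a b 1).ncard < 2 * (cuts a b 2).ncard := by
  have f0 := lay_finite a b 0
  have f1 := lay_finite a b 1
  have f2 := lay_finite a b 2
  have c1 : cuts a b 1 = lay a b 0 := by rw [cuts_succ, cuts_zero, Set.empty_union]
  have c2 : cuts a b 2 = lay a b 0 ∪ lay a b 1 := by rw [cuts_succ, c1]
  have c3 : cuts a b 3 = lay a b 0 ∪ lay a b 1 ∪ lay a b 2 := by rw [cuts_succ, c2]
  have n2 : (cuts a b 2).ncard = (lay a b 0).ncard + (lay a b 1 \ lay a b 0).ncard := by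
    rw [c2, ← Set.union_diff_self, Set.ncard_union_eq Set.disjoint_sdiff_right f0 f1.diff]
  have n3 : (cuts a b 3).ncard = (cuts a b 2).ncard + (lay a b 2 \ cuts a b 2).ncard := by
    rw [c3, c2, ← Set.union_diff_self,
      Set.ncard_union_eq Set.disjoint_sdiff_right (f0.union f1) f2.diff]
  have hinj : Set.InjOn (fun y => nrmB b (y / a)) (lay a b 1 \ lay a b 0) := by
    intro x hx y hy h
    have B := lay_bounds ha hb hx.1
    have B' := lay_bounds ha hb hy.1
    exact nrmB_div_inj ha hb B.1 B.2 B'.1 B'.2 h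
  have key : (lay a b 2 \ cuts a b 2).ncard < (lay a b 1 \ lay a b 0).ncard := by
    rw [← Set.ncard_image_of_injOn hinj]
    refine Set.ncard_lt_ncard ?_ (f1.diff.image _)
    rw [Set.ssubset_iff_of_subset]
    · obtain ⟨r, hr, hre⟩ := lay_succ_exists ha hb he2
      refine ⟨e, ⟨r, ⟨hr, fun h0 => he1 ?_⟩, hre⟩, fun h => h.2 ?_⟩
      · rw [← hre]; exact lay_mem_succ ha hb h0
      · rw [c2]; exact Or.inl he0
    · rintro x ⟨hx, hx'⟩
      obtain ⟨r, hr, hre⟩ := lay_succ_exists ha hb hx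
      refine ⟨r, ⟨hr, fun h0 => hx' ?_⟩, hre⟩
      rw [c2, ← hre]; exact Or.inr (lay_mem_succ ha hb h0)
  rw [c1]; omega

lemma exists_e {p b : ℕ} (hp : p.Prime) (hb : 5 ≤ b) (hpb : p * p ∣ b) :
    ∃ e : ℝ, e ∈ lay (p : ℝ) b 0 ∧ e ∈ lay (p : ℝ) b 2 ∧ e ∉ lay (p : ℝ) b 1 := by
  obtain ⟨m, hm⟩ := hpb
  have hp2 := hp.two_le
  have hp1 : (1 : ℝ) < p := by exact_mod_cast hp.one_lt
  have hp0 : (0 : ℝ) < p := by linarith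
  have hb0 : (0 : ℝ) < b := by exact_mod_cast (by omega : 0 < b)
  have hm1 : 1 ≤ m := by
    rcases Nat.eq_zero_or_pos m with rfl | h
    · omega
    · exact h
  have hlt : p + 1 < p * p := by nlinarith
  have hlt2 : (p + 1) * m < b := by rw [hm]; exact Nat.mul_lt_mul_of_pos_right hlt hm1
  have hpb' : p + 1 < b := by nlinarith
  have h1 : (1 : ℝ) ≤ (((p + 1) * m : ℕ) : ℝ) := by
    exact_mod_cast Nat.mul_pos (by omega) hm1
  have heq : (((p + 1) * m : ℕ) : ℝ) = nrmB b (((p + 1 : ℕ) : ℝ) / (p : ℝ) ^ 2) := by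
    rw [← nrmB_mul_zpow hb (x := ((p + 1 : ℕ) : ℝ) / (p : ℝ) ^ 2) (by positivity) 1]
    have : ((p + 1 : ℕ) : ℝ) / (p : ℝ) ^ 2 * (b : ℝ) ^ (1 : ℤ) = (((p + 1) * m : ℕ) : ℝ) := by
      rw [zpow_one, hm]; push_cast; field_simp
    rw [this, nrmB_self hb h1 (by exact_mod_cast hlt2)]
  refine ⟨(((p + 1) * m : ℕ) : ℝ), ⟨(p + 1) * m, by exact_mod_cast h1, hlt2, ?_⟩,
    ⟨p + 1, by omega, hpb', heq⟩, ?_⟩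
  · rw [pow_zero, div_one, nrmB_self hb h1 (by exact_mod_cast hlt2)]
  · rintro ⟨d, hd, hd', h⟩
    have hd1 : (1 : ℝ) ≤ d := by exact_mod_cast hd
    have hpb2 : ((p : ℝ) + 1) < b := by exact_mod_cast hpb'
    rw [heq, pow_one, pow_two, ← div_div] at h
    have h3 := nrmB_div_inj hp1 hb (x := ((p + 1 : ℕ) : ℝ) / p) (y := d)
      (by rw [le_div_iff₀ hp0]; push_cast; linarith)
      (by rw [div_lt_iff₀ hp0]; push_cast; nlinarith) hd1 (by exact_mod_cast hd') h
    rw [div_eq_iff hp0.ne'] at h3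
    have h4 : p + 1 = d * p := by exact_mod_cast h3
    have h5 : p ∣ 1 := (Nat.dvd_add_right (dvd_refl p)).1 ⟨d, by rw [h4]; ring⟩
    have := Nat.le_of_dvd one_pos h5
    omega

lemma irr_of {p b : ℕ} (hp : p.Prime) (hb : 5 ≤ b) (h : ¬ ∃ k, b = p ^ k) :
    Irrational (Real.logb b p) := by
  have hb1 : (1 : ℝ) < b := by exact_mod_cast (by omega : 1 < b)
  have hp1 : (1 : ℝ) < p := by exact_mod_cast hp.one_lt
  rintro ⟨r, hr⟩
  have hpos : 0 < Real.logb b p := Real.logb_pos hb1 hp1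
  rw [← hr] at hpos
  have hrpos : 0 < r := by exact_mod_cast hpos
  have hnum : 0 < r.num := Rat.num_pos.2 hrpos
  have hden : (0 : ℝ) < r.den := by exact_mod_cast r.den_pos
  have hrr : (r : ℝ) = (r.num.toNat : ℝ) / (r.den : ℝ) := by
    have h1 : ((r.num.toNat : ℤ) : ℝ) = (r.num : ℝ) := by rw [Int.toNat_of_nonneg hnum.le]
    rw [Rat.cast_def, ← h1, Int.cast_natCast]
  have hlog : (r.den : ℝ) * Real.log p = r.num.toNat * Real.log b := by
    have hlb : 0 < Real.log b := Real.log_pos hb1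
    have : Real.log p / Real.log b = (r.num.toNat : ℝ) / (r.den : ℝ) := by
      rw [← hrr, hr, Real.logb]
    field_simp at this
    linarith
  rw [← Real.log_pow, ← Real.log_pow] at hlog
  have he := Real.log_injOn_pos (Set.mem_Ioi.2 (by positivity)) (Set.mem_Ioi.2 (by positivity)) hlog
  have he' : p ^ r.den = b ^ r.num.toNat := by exact_mod_cast he
  have hdvd : b ∣ p ^ r.den := by
    rw [he']; exact dvd_pow_self b (by omega)
  obtain ⟨k, -, hk⟩ := (Nat.dvd_prime_pow hp).1 hdvd
  exact h ⟨k, hk⟩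

lemma bounded_of {p b k : ℕ} (hp : p.Prime) (hb : 5 ≤ b) (h : b = p ^ k) (n : ℕ) :
    blockComplexity (p : ℝ) b n ≤ k := by
  have hp0 : (0 : ℝ) < p := by exact_mod_cast hp.pos
  have hk : 0 < k := by
    rcases Nat.eq_zero_or_pos k with rfl | h'
    · simp at h; omega
    · exact h'
  have hper : ∀ m t : ℕ, leadingDigit b ((p : ℝ) ^ (m + k * t)) = leadingDigit b ((p : ℝ) ^ m) := by
    intro m t
    rw [← ld_mul_zpow hb (x := (p : ℝ) ^ m) (by positivity) t]
    congr 1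
    rw [pow_add, pow_mul, zpow_natCast, h]
    push_cast; rfl
  have hsub : {w : Fin n → ℕ | ∃ m : ℕ, 1 ≤ m ∧
      ∀ i : Fin n, w i = leadingDigit b ((p : ℝ) ^ (m + (i : ℕ)))} ⊆
      (fun m : ℕ => fun i : Fin n => leadingDigit b ((p : ℝ) ^ (m + (i : ℕ)))) '' Set.Iio k := by
    rintro w ⟨m, -, hw⟩
    refine ⟨m % k, Nat.mod_lt _ hk, ?_⟩
    funext i
    rw [hw i]
    change leadingDigit b ((p : ℝ) ^ (m % k + (i : ℕ))) = _
    rw [← hper (m % k + i) (m / k)]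
    congr 2
    have := Nat.mod_add_div m k
    omega
  refine (Set.ncard_le_ncard hsub ((Set.finite_Iio k).image _)).trans ?_
  refine (Set.ncard_image_le (Set.finite_Iio k)).trans ?_
  rw [Set.ncard_eq_toFinset_card']
  simp

/-- For every non-squarefree integer `b ≥ 5` there is an integer `a`
with `1 < a < b` such that `p_{a,b}(n)` is not of the form `c·n + d` (for all `n ≥ 1`)
with integers `c ≥ 1` and `d`. -/
theorem exists_nonlinear_blockComplexity (b : ℕ) (hb : 5 ≤ b) (hnsf : ¬ Squarefree b) :
    ∃ a : ℕ, 1 < a ∧ a < b ∧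
      ¬ ∃ c d : ℤ, 1 ≤ c ∧ ∀ n : ℕ, 1 ≤ n →
        (blockComplexity (a : ℝ) b n : ℤ) = c * n + d := by
  rw [Nat.squarefree_iff_prime_squarefree] at hnsf
  push Not at hnsf
  obtain ⟨p, hp, hpb⟩ := hnsf
  have hp2 := hp.two_le
  refine ⟨p, hp.one_lt, ?_, ?_⟩
  · have := Nat.le_of_dvd (by omega) hpb
    nlinarith
  rintro ⟨c, d, hc, H⟩
  by_cases hk : ∃ k, b = p ^ k
  · obtain ⟨k, hk⟩ := hk
    have h1 := H (k + d.natAbs + 1) (by omega)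
    have h2 := bounded_of hp hb hk (k + d.natAbs + 1)
    have h3 : (blockComplexity (p : ℝ) b (k + d.natAbs + 1) : ℤ) ≤ k := by exact_mod_cast h2
    rw [h1] at h3
    push_cast at h3
    have h4 : -|d| ≤ d := neg_abs_le d
    have h5 : 0 ≤ |d| := abs_nonneg d
    nlinarith
  · have hirr := irr_of hp hb hk
    have hp1 : (1 : ℝ) < p := by exact_mod_cast hp.one_lt
    obtain ⟨e, e0, e2, e1⟩ := exists_e hp hb hpb
    have hc := cuts_count hp1 hb e0 e2 e1
    rw [← blockComplexity_eq hp1 hb hirr (by norm_num),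
      ← blockComplexity_eq hp1 hb hirr (by norm_num),
      ← blockComplexity_eq hp1 hb hirr (by norm_num)] at hc
    have h1 := H 1 (by norm_num)
    have h2 := H 2 (by norm_num)
    have h3 := H 3 (by norm_num)
    push_cast at h1 h2 h3
    omega
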